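/- Let ι be a type of propositional variables, T_S a source theory, T_B a bridging theory, and V_A ⊆ ι a vocabulary. Then ⟨wsc(T_S;T_B;V_A), snc(T_S;T_B;V_A)⟩ is the tightest abstraction from T_S with respect to T_B over V_A: for every theory C over V_A, T_B ∩ C ⊆ T_S if and only if T_B ∩ C ⊆ wsc(T_S;T_B;V_A); and for every theory D over V_A, T_B ∩ T_S ⊆ D if and only if T_B ∩ snc(T_S;T_B;V_A) ⊆ D. -/

import Mathlib

def Agrees {ι : Type*} (W : Set ι) (w w' : ι → Bool) : Prop := ∀ i ∈ W, w i = w' i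

def IsOver {ι : Type*} (T : Set (ι → Bool)) (W : Set ι) : Prop :=
  ∀ w w', Agrees W w w' → (w ∈ T ↔ w' ∈ T)

def snc {ι : Type*} (A T : Set (ι → Bool)) (W : Set ι) : Set (ι → Bool) :=
  {w | ∃ w', w' ∈ T ∧ w' ∈ A ∧ Agrees W w' w}

def wsc {ι : Type*} (A T : Set (ι → Bool)) (W : Set ι) : Set (ι → Bool) :=
  {w | ∀ w', Agrees W w w' → w' ∈ T → w' ∈ A}

/-!
The theory `wsc A T W` is the largest theory over `W` which together with `T` entails `A`, and
`snc A T W` is the smallest theory over `W` entailed by `T ∩ A`. These extremal properties survive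
intersection with `T` because `T ∩ wsc A T W ⊆ A` and `T ∩ A ⊆ snc A T W`.
-/

section

variable {ι : Type*} {W : Set ι} {u v w : ι → Bool} {A C D T : Set (ι → Bool)}

theorem Agrees.refl (W : Set ι) (w : ι → Bool) : Agrees W w w := Set.eqOn_refl w W

theorem Agrees.symm (h : Agrees W u v) : Agrees W v u := Set.EqOn.symm h

theorem Agrees.trans (huv : Agrees W u v) (hvw : Agrees W v w) : Agrees W u w :=
  Set.EqOn.trans huv hvw

theorem IsOver.of_forall_mem (h : ∀ u v, Agrees W u v → u ∈ T → v ∈ T) : IsOver T W :=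
  fun u v huv => ⟨h u v huv, h v u huv.symm⟩

theorem IsOver.mem_of_agrees (hT : IsOver T W) (huv : Agrees W u v) (hu : u ∈ T) : v ∈ T :=
  (hT u v huv).1 hu

theorem isOver_wsc (A T : Set (ι → Bool)) (W : Set ι) : IsOver (wsc A T W) W :=
  .of_forall_mem fun _ _ huv hu w hvw => hu w (huv.trans hvw)

theorem isOver_snc (A T : Set (ι → Bool)) (W : Set ι) : IsOver (snc A T W) W :=
  .of_forall_mem fun _ _ huv ⟨w, hwT, hwA, hwu⟩ => ⟨w, hwT, hwA, hwu.trans huv⟩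

theorem inter_wsc_subset (A T : Set (ι → Bool)) (W : Set ι) : T ∩ wsc A T W ⊆ A :=
  fun w ⟨hwT, hw⟩ => hw w (Agrees.refl W w) hwT

theorem inter_subset_snc (A T : Set (ι → Bool)) (W : Set ι) : T ∩ A ⊆ snc A T W :=
  fun w ⟨hwT, hwA⟩ => ⟨w, hwT, hwA, Agrees.refl W w⟩

theorem IsOver.subset_wsc_iff (hC : IsOver C W) : C ⊆ wsc A T W ↔ T ∩ C ⊆ A where
  mp h := (Set.inter_subset_inter_right T h).trans (inter_wsc_subset A T W)
  mpr h _ hw _ hwu huT := h ⟨huT, hC.mem_of_agrees hwu hw⟩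

theorem IsOver.snc_subset_iff (hD : IsOver D W) : snc A T W ⊆ D ↔ T ∩ A ⊆ D where
  mp h := (inter_subset_snc A T W).trans h
  mpr := fun h _ ⟨_, huT, huA, huw⟩ => hD.mem_of_agrees huw (h ⟨huT, huA⟩)

theorem IsOver.inter_subset_iff_inter_subset_wsc (hC : IsOver C W) :
    T ∩ C ⊆ A ↔ T ∩ C ⊆ wsc A T W where
  mp h := Set.inter_subset_right.trans (hC.subset_wsc_iff.2 h)
  mpr h := (Set.subset_inter Set.inter_subset_left h).trans (inter_wsc_subset A T W)

theorem IsOver.inter_subset_iff_inter_snc_subset (hD : IsOver D W) :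
    T ∩ A ⊆ D ↔ T ∩ snc A T W ⊆ D where
  mp h := Set.inter_subset_right.trans (hD.snc_subset_iff.2 h)
  mpr h := (Set.subset_inter Set.inter_subset_left (inter_subset_snc A T W)).trans h

end

theorem tightest_abstraction {ι : Type*} (TS TB : Set (ι → Bool)) (VA : Set ι) :
    IsOver (wsc TS TB VA) VA ∧ IsOver (snc TS TB VA) VA ∧
    (∀ C : Set (ι → Bool), IsOver C VA → (TB ∩ C ⊆ TS ↔ TB ∩ C ⊆ wsc TS TB VA)) ∧
    (∀ D : Set (ι → Bool), IsOver D VA → (TB ∩ TS ⊆ D ↔ TB ∩ snc TS TB VA ⊆ D)) :=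
  ⟨isOver_wsc TS TB VA, isOver_snc TS TB VA,
    fun _ hC => hC.inter_subset_iff_inter_subset_wsc,
    fun _ hD => hD.inter_subset_iff_inter_snc_subset⟩
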